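/- If T ≥ 0 is an unbiased shift of B such that P₀{B_T = 0} = 1 and P₀{T > 0} > 0, then E₀[T] = ∞. -/

import Mathlib

open MeasureTheory ProbabilityTheory

/-- A two-sided standard Brownian motion: a.s. continuous paths, `B₀ = 0`, independent
increments, and `B_t − B_s` centered Gaussian with variance `t − s` for `s < t`. -/
structure IsTwoSidedBM {Ω : Type*} [MeasurableSpace Ω] (P : Measure Ω) (B : ℝ → Ω → ℝ) :
    Prop where
  aemeas : ∀ t : ℝ, AEMeasurable (B t) P
  cont : ∀ᵐ ω ∂P, Continuous fun t => B t ω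
  zero : ∀ᵐ ω ∂P, B 0 ω = 0
  indepIncr : ∀ (n : ℕ) (t : Fin (n + 1) → ℝ), Monotone t →
    iIndepFun
      (fun (i : Fin n) ω => B (t i.succ) ω - B (t i.castSucc) ω) P
  gaussIncr : ∀ s t : ℝ, s < t →
    Measure.map (fun ω => B t ω - B s ω) P = gaussianReal 0 (Real.toNNReal (t - s))

/-- A random time: a measurable function of the path of `B`. -/
def IsRandomTime {Ω : Type*} [MeasurableSpace Ω] (B : ℝ → Ω → ℝ) (T : Ω → ℝ) : Prop :=
  @Measurable Ω ℝ (MeasurableSpace.comap (fun ω (t : ℝ) => B t ω) inferInstance) _ T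

/-- An unbiased shift: a random time `T` such that `(B_{T+t} − B_T)_{t∈ℝ}` is a two-sided
Brownian motion independent of `B_T`. -/
def IsUnbiasedShift {Ω : Type*} [MeasurableSpace Ω] (P : Measure Ω) (B : ℝ → Ω → ℝ)
    (T : Ω → ℝ) : Prop :=
  IsRandomTime B T ∧
  IsTwoSidedBM P (fun t ω => B (T ω + t) ω - B (T ω) ω) ∧
  IndepFun (fun ω (t : ℝ) => B (T ω + t) ω - B (T ω) ω) (fun ω => B (T ω) ω) P

/-- `T` embeds the distribution `ν`: `B_T` has law `ν`. -/
def Embeds {Ω : Type*} [MeasurableSpace Ω] (P : Measure Ω) (B : ℝ → Ω → ℝ) (T : Ω → ℝ)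
    (ν : Measure ℝ) : Prop :=
  Measure.map (fun ω => B (T ω) ω) P = ν

/-- A stopping time with respect to the filtration `(σ(B_s : s ≤ t))_{t ≥ 0}`. -/
def IsBMStoppingTime {Ω : Type*} [MeasurableSpace Ω] (B : ℝ → Ω → ℝ) (T : Ω → ℝ) : Prop :=
  ∀ t : ℝ, 0 ≤ t →
    MeasurableSet[⨆ s ∈ Set.Iic t, MeasurableSpace.comap (B s) inferInstance] {ω | T ω ≤ t}

/-!
Let `μ A` be the expected time that `X` spends in `A` during `(0, T]`; this measure has mass `E[T]`.
Suppose that `E[T] < ∞` and that `X_{T+s}` has the law of `X_s` for all `s > 0`. The path on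
`(0, T + u]` splits both at `T` and at `u`, and the pieces `(T, T + u]` and `(0, u]` have the same
finite occupation measure. Hence `μ` is also the occupation measure of `(u, T + u]`, for every
`u ≥ 0`. For Brownian motion `P(X_{s+u} ∈ K) → 0` as `u → ∞` for every compact `K`, so dominated
convergence forces `μ K = 0`, and then `E[T] = μ univ = 0`.
-/

open Filter Function Set
open scoped ENNReal NNReal Topology

section OccupationMeasure

variable {Ω E : Type*} [MeasurableSpace Ω] [MeasurableSpace E]

/-- The occupation measure of the process `X` between the random times `σ` and `τ`: the mass of `A`
is the expected time that `X` spends in `A` during `(σ, τ]`. Half-open intervals make it exactly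
additive under concatenation. -/
noncomputable def occupationMeasure (P : Measure Ω) (X : ℝ → Ω → E) (σ τ : Ω → ℝ) : Measure E :=
  ((P.prod volume).restrict {p | p.2 ∈ Ioc (σ p.1) (τ p.1)}).map fun p => X p.2 p.1

variable {P : Measure Ω} {X Y : ℝ → Ω → E} {ρ σ τ : Ω → ℝ} {A : Set E}

lemma measurableSet_setOf_mem_Ioc (hσ : Measurable σ) (hτ : Measurable τ) :
    MeasurableSet {p : Ω × ℝ | p.2 ∈ Ioc (σ p.1) (τ p.1)} := by
  simpa using measurableSet_region_between_oc hσ hτ MeasurableSet.univ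

lemma measurable_uncurry_shift (hX : Measurable (uncurry X)) (hτ : Measurable τ) :
    Measurable (uncurry fun s ω => X (s + τ ω) ω) :=
  hX.comp ((measurable_fst.add (hτ.comp measurable_snd)).prodMk measurable_snd)

lemma occupationMeasure_apply_eq_prod (hX : Measurable (uncurry X)) (hA : MeasurableSet A) :
    occupationMeasure P X σ τ A =
      P.prod volume {p | X p.2 p.1 ∈ A ∧ p.2 ∈ Ioc (σ p.1) (τ p.1)} := by
  have hX' : Measurable fun p : Ω × ℝ => X p.2 p.1 := hX.comp measurable_swap
  rw [occupationMeasure, Measure.map_apply hX' hA, Measure.restrict_apply (hX' hA)]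
  rfl

lemma measurableSet_setOf_mem_and_mem_Ioc (hX : Measurable (uncurry X)) (hσ : Measurable σ)
    (hτ : Measurable τ) (hA : MeasurableSet A) :
    MeasurableSet {p : Ω × ℝ | X p.2 p.1 ∈ A ∧ p.2 ∈ Ioc (σ p.1) (τ p.1)} :=
  ((hX.comp measurable_swap) hA).inter (measurableSet_setOf_mem_Ioc hσ hτ)

lemma occupationMeasure_apply (hX : Measurable (uncurry X)) (hσ : Measurable σ) (hτ : Measurable τ)
    (hA : MeasurableSet A) :
    occupationMeasure P X σ τ A =
      ∫⁻ ω, volume {s | X s ω ∈ A ∧ s ∈ Ioc (σ ω) (τ ω)} ∂P := by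
  rw [occupationMeasure_apply_eq_prod hX hA,
    Measure.prod_apply (measurableSet_setOf_mem_and_mem_Ioc hX hσ hτ hA)]
  rfl

lemma occupationMeasure_apply_symm [SFinite P] (hX : Measurable (uncurry X)) (hσ : Measurable σ)
    (hτ : Measurable τ) (hA : MeasurableSet A) :
    occupationMeasure P X σ τ A = ∫⁻ s, P {ω | X s ω ∈ A ∧ s ∈ Ioc (σ ω) (τ ω)} := by
  rw [occupationMeasure_apply_eq_prod hX hA,
    Measure.prod_apply_symm (measurableSet_setOf_mem_and_mem_Ioc hX hσ hτ hA)]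
  rfl

lemma occupationMeasure_univ (hX : Measurable (uncurry X)) (hσ : Measurable σ)
    (hτ : Measurable τ) :
    occupationMeasure P X σ τ univ = ∫⁻ ω, ENNReal.ofReal (τ ω - σ ω) ∂P := by
  simp only [occupationMeasure_apply hX hσ hτ MeasurableSet.univ, mem_univ, true_and,
    ofPred_mem_eq, Real.volume_Ioc]

lemma isFiniteMeasure_occupationMeasure_const [IsFiniteMeasure P] (hX : Measurable (uncurry X))
    (a b : ℝ) : IsFiniteMeasure (occupationMeasure P X (fun _ => a) fun _ => b) := by
  refine ⟨?_⟩
  rw [occupationMeasure_univ hX measurable_const measurable_const, lintegral_const]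
  exact ENNReal.mul_lt_top ENNReal.ofReal_lt_top (measure_lt_top P univ)

lemma occupationMeasure_add (hX : Measurable (uncurry X)) (hσ : Measurable σ) (hτ : Measurable τ)
    (hρσ : ρ ≤ σ) (hστ : σ ≤ τ) :
    occupationMeasure P X ρ σ + occupationMeasure P X σ τ = occupationMeasure P X ρ τ := by
  have hdisj : Disjoint {p : Ω × ℝ | p.2 ∈ Ioc (ρ p.1) (σ p.1)}
      {p : Ω × ℝ | p.2 ∈ Ioc (σ p.1) (τ p.1)} :=
    disjoint_left.2 fun _ hp hq => hp.2.not_gt hq.1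
  have hunion : {p : Ω × ℝ | p.2 ∈ Ioc (ρ p.1) (σ p.1)} ∪ {p | p.2 ∈ Ioc (σ p.1) (τ p.1)} =
      {p | p.2 ∈ Ioc (ρ p.1) (τ p.1)} := by
    ext p
    exact Set.ext_iff.1 (Ioc_union_Ioc_eq_Ioc (hρσ p.1) (hστ p.1)) p.2
  have hX' : Measurable fun p : Ω × ℝ => X p.2 p.1 := hX.comp measurable_swap
  simp only [occupationMeasure]
  rw [← Measure.map_add _ _ hX',
    ← Measure.restrict_union hdisj (measurableSet_setOf_mem_Ioc hσ hτ), hunion]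

lemma occupationMeasure_shift (hX : Measurable (uncurry X)) (hρ : Measurable ρ) (hσ : Measurable σ)
    (hτ : Measurable τ) :
    occupationMeasure P (fun s ω => X (s + ρ ω) ω) σ τ =
      occupationMeasure P X (σ + ρ) (τ + ρ) := by
  ext A hA
  rw [occupationMeasure_apply (measurable_uncurry_shift hX hρ) hσ hτ hA,
    occupationMeasure_apply hX (hσ.add hρ) (hτ.add hρ) hA]
  refine lintegral_congr fun ω => ?_
  rw [← measure_preimage_add_right volume (ρ ω)
    {s | X s ω ∈ A ∧ s ∈ Ioc ((σ + ρ) ω) ((τ + ρ) ω)}]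
  simp

lemma occupationMeasure_const_congr [SFinite P] (hX : Measurable (uncurry X))
    (hY : Measurable (uncurry Y)) {a b : ℝ} (hXY : ∀ s ∈ Ioc a b, P.map (X s) = P.map (Y s)) :
    occupationMeasure P X (fun _ => a) (fun _ => b) =
      occupationMeasure P Y (fun _ => a) fun _ => b := by
  ext A hA
  simp only [occupationMeasure_apply_symm hX measurable_const measurable_const hA,
    occupationMeasure_apply_symm hY measurable_const measurable_const hA]
  refine lintegral_congr fun s => ?_
  by_cases hs : s ∈ Ioc a b
  · have hXYA := DFunLike.congr_fun (hXY s hs) A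
    rw [Measure.map_apply hX.of_uncurry_left hA, Measure.map_apply hY.of_uncurry_left hA] at hXYA
    simp only [hs, and_true]
    exact hXYA
  · simp [hs]

lemma occupationMeasure_shift_const_eq [IsFiniteMeasure P] (hX : Measurable (uncurry X))
    (hτ : Measurable τ) (hτ0 : 0 ≤ τ)
    (hlaw : ∀ s, 0 < s → P.map (fun ω => X (s + τ ω) ω) = P.map (X s)) {u : ℝ} (hu : 0 ≤ u) :
    occupationMeasure P (fun s ω => X (s + u) ω) 0 τ = occupationMeasure P X 0 τ := by
  let c : Ω → ℝ := fun _ => u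
  have hc : Measurable c := measurable_const
  have hc0 : 0 ≤ c := fun _ => hu
  have := isFiniteMeasure_occupationMeasure_const (P := P) hX 0 u
  have hafter : occupationMeasure P X τ (c + τ) = occupationMeasure P X 0 c :=
    calc occupationMeasure P X τ (c + τ)
      _ = occupationMeasure P (fun s ω => X (s + τ ω) ω) 0 c := by
        rw [occupationMeasure_shift hX hτ measurable_zero hc, zero_add]
      _ = occupationMeasure P X 0 c :=
        occupationMeasure_const_congr (measurable_uncurry_shift hX hτ) hX fun s hs => hlaw s hs.1
  have hsplit : occupationMeasure P X 0 c + occupationMeasure P X c (c + τ) =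
      occupationMeasure P X 0 c + occupationMeasure P X 0 τ :=
    calc occupationMeasure P X 0 c + occupationMeasure P X c (c + τ)
      _ = occupationMeasure P X 0 (c + τ) :=
        occupationMeasure_add hX hc (hc.add hτ) hc0 (le_add_of_nonneg_right hτ0)
      _ = occupationMeasure P X 0 τ + occupationMeasure P X τ (c + τ) :=
        (occupationMeasure_add hX hτ (hc.add hτ) hτ0 (le_add_of_nonneg_left hc0)).symm
      _ = occupationMeasure P X 0 c + occupationMeasure P X 0 τ := by rw [hafter, add_comm]
  have hshift : occupationMeasure P (fun s ω => X (s + u) ω) 0 τ =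
      occupationMeasure P X c (c + τ) := by
    rw [occupationMeasure_shift hX hc measurable_zero hτ, zero_add, add_comm]
  rw [hshift]
  ext A -
  exact (ENNReal.add_right_inj (measure_ne_top _ A)).1 (DFunLike.congr_fun hsplit A)

lemma tendsto_occupationMeasure_shift_const [SFinite P] (hX : Measurable (uncurry X))
    (hσ : Measurable σ) (hτ : Measurable τ) (hfin : ∫⁻ ω, ENNReal.ofReal (τ ω - σ ω) ∂P ≠ ∞)
    (hA : MeasurableSet A) (hXA : Tendsto (fun t => P (X t ⁻¹' A)) atTop (𝓝 0)) :
    Tendsto (fun u => occupationMeasure P (fun s ω => X (s + u) ω) σ τ A) atTop (𝓝 0) := by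
  have hshift (u : ℝ) : Measurable (uncurry fun s ω => X (s + u) ω) :=
    measurable_uncurry_shift hX measurable_const
  simp only [occupationMeasure_apply_symm (hshift _) hσ hτ hA]
  rw [← lintegral_zero (μ := (volume : Measure ℝ))]
  refine tendsto_lintegral_filter_of_dominated_convergence
    (fun s => P {ω | s ∈ Ioc (σ ω) (τ ω)}) (.of_forall fun u => ?_)
    (.of_forall fun u => .of_forall fun s => measure_mono fun ω hω => hω.2) ?_
    (.of_forall fun s => ?_)
  · exact measurable_measure_prodMk_right
      (measurableSet_setOf_mem_and_mem_Ioc (hshift u) hσ hτ hA)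
  · simpa [← occupationMeasure_univ hX hσ hτ,
      occupationMeasure_apply_symm hX hσ hτ MeasurableSet.univ] using hfin
  · exact tendsto_of_tendsto_of_tendsto_of_le_of_le tendsto_const_nhds
      (hXA.comp (tendsto_atTop_add_const_left _ s tendsto_id)) (fun _ => zero_le)
      fun u => measure_mono fun ω hω => hω.1

end OccupationMeasure

section Modification

variable {Ω E ι : Type*} [MeasurableSpace Ω] {P : Measure Ω} [TopologicalSpace E]
  [TopologicalSpace.PseudoMetrizableSpace E] [MeasurableSpace E] [BorelSpace E] [Nonempty E]
  [TopologicalSpace ι] [TopologicalSpace.MetrizableSpace ι] [SecondCountableTopology ι]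
  [MeasurableSpace ι] [OpensMeasurableSpace ι]

lemma exists_measurable_uncurry_of_ae_continuous {X : ι → Ω → E} (hX : ∀ t, AEMeasurable (X t) P)
    (hcont : ∀ᵐ ω ∂P, Continuous fun t => X t ω) :
    ∃ Y : ι → Ω → E, Measurable (uncurry Y) ∧ ∀ᵐ ω ∂P, ∀ t, Y t ω = X t ω := by
  classical
  obtain ⟨D, hDcount, hDdense⟩ := TopologicalSpace.exists_countable_dense ι
  have hD : ∀ᵐ ω ∂P, ∀ t ∈ D, X t ω = (hX t).mk (X t) ω :=
    (ae_ball_iff hDcount).2 fun t _ => (hX t).ae_eq_mk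
  obtain ⟨G, hGae, hG, hGgood⟩ := (hcont.and hD).exists_measurable_mem
  let e : E := Classical.arbitrary E
  let Y : ι → Ω → E := fun t => G.piecewise (X t) fun _ => e
  have hYcont (ω : Ω) : Continuous fun t => Y t ω := by
    by_cases hω : ω ∈ G
    · simpa [Y, hω] using (hGgood ω hω).1
    · simpa [Y, hω] using continuous_const
  have hYD (t : ι) (ht : t ∈ D) : Measurable (Y t) := by
    have hYmk : Y t = G.piecewise ((hX t).mk (X t)) fun _ => e :=
      funext fun ω => ite_congr rfl (fun hω => (hGgood ω hω).2 t ht) fun _ => rfl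
    rw [hYmk]
    exact (hX t).measurable_mk.piecewise hG measurable_const
  have hYmeas (t : ι) : Measurable (Y t) := by
    obtain ⟨v, hvD, hvt⟩ := mem_closure_iff_seq_limit.1 (hDdense t)
    exact measurable_of_tendsto_metrizable (fun n => hYD (v n) (hvD n))
      (tendsto_pi_nhds.2 fun ω => ((hYcont ω).tendsto t).comp hvt)
  refine ⟨Y, measurable_uncurry_of_continuous_of_measurable hYcont hYmeas, ?_⟩
  filter_upwards [hGae] with ω hω t
  exact piecewise_eq_of_mem _ _ _ hω

lemma aemeasurable_eval_of_ae_continuous {X : ι → Ω → E} {T : Ω → ι}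
    (hX : ∀ t, AEMeasurable (X t) P) (hcont : ∀ᵐ ω ∂P, Continuous fun t => X t ω)
    (hT : AEMeasurable T P) : AEMeasurable (fun ω => X (T ω) ω) P := by
  obtain ⟨Y, hY, hYX⟩ := exists_measurable_uncurry_of_ae_continuous hX hcont
  refine (hY.comp_aemeasurable (hT.prodMk aemeasurable_id)).congr ?_
  filter_upwards [hYX] with ω hω using hω (T ω)

end Modification

section Transience

variable {Ω E : Type*} [MeasurableSpace Ω] {P : Measure Ω} [TopologicalSpace E] [MeasurableSpace E]
  [BorelSpace E]

lemma lintegral_eq_zero_of_map_shift_eq [IsFiniteMeasure P] [T2Space E] [SigmaCompactSpace E]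
    {X : ℝ → Ω → E} {τ : Ω → ℝ} (hX : Measurable (uncurry X))
    (hescape : ∀ K, IsCompact K → Tendsto (fun t => P (X t ⁻¹' K)) atTop (𝓝 0))
    (hτ : Measurable τ) (hτ0 : 0 ≤ τ)
    (hlaw : ∀ s, 0 < s → P.map (fun ω => X (s + τ ω) ω) = P.map (X s))
    (hfin : ∫⁻ ω, ENNReal.ofReal (τ ω) ∂P ≠ ∞) :
    ∫⁻ ω, ENNReal.ofReal (τ ω) ∂P = 0 := by
  have hcompact (K : Set E) (hK : IsCompact K) : occupationMeasure P X 0 τ K = 0 := by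
    have hlim := tendsto_occupationMeasure_shift_const hX measurable_zero hτ (by simpa using hfin)
      hK.measurableSet (hescape K hK)
    refine tendsto_nhds_unique (tendsto_const_nhds.congr' ?_) hlim
    filter_upwards [eventually_ge_atTop 0] with u hu
    rw [occupationMeasure_shift_const_eq hX hτ hτ0 hlaw hu]
  have huniv : occupationMeasure P X 0 τ univ = 0 := by
    rw [← iUnion_compactCovering]
    exact measure_iUnion_null fun n => hcompact _ (isCompact_compactCovering E n)
  simpa [occupationMeasure_univ hX measurable_zero hτ] using huniv

theorem nonneg_unbiased_shift_first_moment_infinite_general [IsFiniteMeasure P]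
    [TopologicalSpace.MetrizableSpace E] [SigmaCompactSpace E] {X : ℝ → Ω → E}
    (hX : ∀ t, AEMeasurable (X t) P) (hcont : ∀ᵐ ω ∂P, Continuous fun t => X t ω)
    (hescape : ∀ K, IsCompact K → Tendsto (fun t => P (X t ⁻¹' K)) atTop (𝓝 0))
    {T : Ω → ℝ} (hT : AEMeasurable T P) (hT0 : 0 ≤ᵐ[P] T)
    (hlaw : ∀ s, 0 < s → P.map (fun ω => X (T ω + s) ω) = P.map (X s))
    (hTpos : 0 < P {ω | 0 < T ω}) :
    ∫⁻ ω, ENNReal.ofReal (T ω) ∂P = ∞ := by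
  obtain ⟨ω₀, -⟩ := nonempty_of_measure_ne_zero hTpos.ne'
  have : Nonempty E := ⟨X 0 ω₀⟩
  obtain ⟨Y, hY, hYX⟩ := exists_measurable_uncurry_of_ae_continuous hX hcont
  obtain ⟨τ, hτ, hτ0, hTτ⟩ := hT.exists_ae_eq_range_subset (t := Ici 0) hT0 nonempty_Ici
  have hYescape (K : Set E) (hK : IsCompact K) : Tendsto (fun t => P (Y t ⁻¹' K)) atTop (𝓝 0) := by
    refine (hescape K hK).congr fun t => measure_congr ?_
    filter_upwards [hYX] with ω hω
    exact congrArg (· ∈ K) (hω t).symm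
  have hYlaw (s : ℝ) (hs : 0 < s) : P.map (fun ω => Y (s + τ ω) ω) = P.map (Y s) := by
    rw [Measure.map_congr (hYX.mono fun ω hω => hω s), ← hlaw s hs]
    refine Measure.map_congr ?_
    filter_upwards [hYX, hTτ] with ω hω hTω
    rw [hω, hTω, add_comm]
  have hlint : ∫⁻ ω, ENNReal.ofReal (T ω) ∂P = ∫⁻ ω, ENNReal.ofReal (τ ω) ∂P :=
    lintegral_congr_ae (hTτ.mono fun ω hω => congrArg ENNReal.ofReal hω)
  by_contra hfin
  have hzero : ∫⁻ ω, ENNReal.ofReal (T ω) ∂P = 0 := hlint.trans <|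
    lintegral_eq_zero_of_map_shift_eq hY hYescape hτ (fun ω => hτ0 (mem_range_self ω)) hYlaw
      (hlint ▸ hfin)
  have hT_nonpos : ∀ᵐ ω ∂P, T ω ≤ 0 :=
    ((lintegral_eq_zero_iff' hT.ennreal_ofReal).1 hzero).mono fun ω => ENNReal.ofReal_eq_zero.1
  exact hTpos.ne' (by simpa [ae_iff] using hT_nonpos)

end Transience

section Gaussian

lemma gaussianReal_apply_le (m : ℝ) {v : ℝ≥0} (hv : v ≠ 0) (s : Set ℝ) :
    gaussianReal m v s ≤ ENNReal.ofReal (√(2 * Real.pi * v))⁻¹ * volume s := by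
  have hpdf (x : ℝ) : gaussianPDF m v x ≤ ENNReal.ofReal (√(2 * Real.pi * v))⁻¹ := by
    refine ENNReal.ofReal_le_ofReal (mul_le_of_le_one_right (by positivity) ?_)
    rw [Real.exp_le_one_iff, neg_div, neg_nonpos]
    positivity
  calc gaussianReal m v s = ∫⁻ x in s, gaussianPDF m v x := gaussianReal_apply m hv s
    _ ≤ ∫⁻ _ in s, ENNReal.ofReal (√(2 * Real.pi * v))⁻¹ := lintegral_mono hpdf
    _ = ENNReal.ofReal (√(2 * Real.pi * v))⁻¹ * volume s := setLIntegral_const s _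

lemma tendsto_gaussianReal_apply_atTop (m : ℝ) {s : Set ℝ} (hs : volume s ≠ ∞) :
    Tendsto (fun v : ℝ≥0 => gaussianReal m v s) atTop (𝓝 0) := by
  have hdensity : Tendsto (fun v : ℝ≥0 => (√(2 * Real.pi * v))⁻¹) atTop (𝓝 0) :=
    (Real.tendsto_sqrt_atTop.comp
      (NNReal.tendsto_coe_atTop.2 tendsto_id |>.const_mul_atTop (by positivity))).inv_tendsto_atTop
  have hbound := ENNReal.Tendsto.mul_const (ENNReal.tendsto_ofReal hdensity) (.inr hs)
  rw [ENNReal.ofReal_zero, zero_mul] at hbound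
  refine tendsto_of_tendsto_of_tendsto_of_le_of_le' tendsto_const_nhds hbound
    (.of_forall fun _ => zero_le) ?_
  filter_upwards [eventually_ne_atTop 0] with v hv using gaussianReal_apply_le m hv s

end Gaussian

section BrownianMotion

variable {Ω : Type*} [MeasurableSpace Ω] {P : Measure Ω} {B : ℝ → Ω → ℝ} {T : Ω → ℝ}

lemma IsTwoSidedBM.map_eq_gaussianReal (hB : IsTwoSidedBM P B) {t : ℝ} (ht : 0 < t) :
    P.map (B t) = gaussianReal 0 t.toNNReal := by
  rw [← sub_zero t, ← hB.gaussIncr 0 t ht, sub_zero]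
  refine Measure.map_congr ?_
  filter_upwards [hB.zero] with ω hω
  rw [hω, sub_zero]

lemma IsTwoSidedBM.tendsto_measure_preimage_isCompact (hB : IsTwoSidedBM P B) {K : Set ℝ}
    (hK : IsCompact K) : Tendsto (fun t => P (B t ⁻¹' K)) atTop (𝓝 0) := by
  refine ((tendsto_gaussianReal_apply_atTop 0 hK.measure_ne_top).comp
    tendsto_real_toNNReal_atTop).congr' ?_
  filter_upwards [eventually_gt_atTop 0] with t ht
  rw [comp_apply, ← hB.map_eq_gaussianReal ht,
    Measure.map_apply_of_aemeasurable (hB.aemeas t) hK.measurableSet]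

lemma IsRandomTime.aemeasurable (hT : IsRandomTime B T) (hB : ∀ t, AEMeasurable (B t) P) :
    AEMeasurable T P := by
  have hpath : @Measurable (NullMeasurableSpace Ω P) (ℝ → ℝ) _ _ fun ω t => B t ω :=
    measurable_pi_lambda _ fun t => (hB t).nullMeasurable
  have hTnull : NullMeasurable T P := fun _ hs => hpath.comap_le _ (hT hs)
  exact hTnull.aemeasurable

lemma IsUnbiasedShift.map_shift_eq (hB : IsTwoSidedBM P B) (hT : IsUnbiasedShift P B T)
    (hBT : ∀ᵐ ω ∂P, B (T ω) ω = 0) {s : ℝ} (hs : 0 < s) :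
    P.map (fun ω => B (T ω + s) ω) = P.map (B s) := by
  rw [hB.map_eq_gaussianReal hs, ← hT.2.1.map_eq_gaussianReal hs]
  refine Measure.map_congr ?_
  filter_upwards [hBT] with ω hω
  rw [hω, sub_zero]

end BrownianMotion

/-- if `T ≥ 0` is an unbiased shift with `P₀{B_T = 0} = 1` and
`P₀{T > 0} > 0`, then `E₀[T] = ∞`. -/
theorem nonneg_unbiased_shift_first_moment_infinite {Ω : Type*} [MeasurableSpace Ω]
    (P : Measure Ω) [IsProbabilityMeasure P]
    (B : ℝ → Ω → ℝ) (hB : IsTwoSidedBM P B)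
    (T : Ω → ℝ) (hT0 : ∀ ω, 0 ≤ T ω) (hT : IsUnbiasedShift P B T)
    (hBT : P {ω | B (T ω) ω = 0} = 1) (hTpos : 0 < P {ω | 0 < T ω}) :
    ∫⁻ ω, ENNReal.ofReal (T ω) ∂P = ⊤ := by
  have hTm : AEMeasurable T P := hT.1.aemeasurable hB.aemeas
  have hBT_ae : ∀ᵐ ω ∂P, B (T ω) ω = 0 :=
    (mem_ae_iff_prob_eq_one₀ <| (aemeasurable_eval_of_ae_continuous hB.aemeas hB.cont
      hTm).nullMeasurable (measurableSet_singleton 0)).2 hBT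
  exact nonneg_unbiased_shift_first_moment_infinite_general hB.aemeas hB.cont
    (fun _ => hB.tendsto_measure_preimage_isCompact) hTm (.of_forall hT0)
    (fun _ => hT.map_shift_eq hB hBT_ae) hTpos
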